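/- arXiv:1403.5842 — 5 statements merged into one kernel-verified Lean document; each statement's English description precedes it below -/
import Mathlib

section
/- The difference divergence operator commutes with any prolonged vector field: for every p-tuple P = (P^1,…,P^p) of difference functions and every characteristic Q, and all n ∈ ℤ^p and fields u : ℤ^p → ℝ^q, Σ_{i=1}^p [(pr v P^i)(n+1_i,u) − (pr v P^i)(n,u)] = (pr v (Div P))(n,u). -/
open scoped Classical

/-- Multi-indices / lattice points of the lattice `ℤ^p`. -/
abbrev Idx (p : ℕ) : Type := Fin p → ℤ

/-- Fields `u : ℤ^p → ℝ^q`. -/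
abbrev Fld (p q : ℕ) : Type := Idx p → Fin q → ℝ

/-- Difference functions (raw): functions of a lattice point and a field. -/
abbrev DFun (p q : ℕ) : Type := Idx p → Fld p q → ℝ

/-- Replace the value `u^α(m)` of the field `u` by `t`. -/
noncomputable def upd {p q : ℕ} (u : Fld p q) (m : Idx p) (α : Fin q) (t : ℝ) : Fld p q :=
  fun m' β => if m' = m ∧ β = α then t else u m' β

/-- The partial derivative `∂F/∂u_J^α (n,u)`: the derivative of `F(n,u)` with
respect to the value `u^α(n+J)`. -/
noncomputable def pd {p q : ℕ} (F : DFun p q) (J : Idx p) (α : Fin q) : DFun p q :=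
  fun n u => deriv (fun t => F n (upd u (n + J) α t)) (u (n + J) α)

/-- The shift operator `S_K`. -/
def Sh {p q : ℕ} (K : Idx p) (F : DFun p q) : DFun p q := fun n u => F (n + K) u

/-- `F` is a difference function with stencil `S`: `F(n,u)` depends on `u` only
through the finitely many values `u(n+J)`, `J ∈ S`, smoothly in those values. -/
def IsDiffFun {p q : ℕ} (F : DFun p q) (S : Finset (Idx p)) : Prop :=
  ∃ G : Idx p → (({J // J ∈ S} → Fin q → ℝ) → ℝ),
    (∀ n, ContDiff ℝ (⊤ : ℕ∞) (G n)) ∧ ∀ n u, F n u = G n fun J α => u (n + J.1) α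

/-- The prolonged vector field of a characteristic `Q`, acting on a difference
function `F` with stencil `S`:
`(pr v F)(n,u) = Σ_α Σ_{J ∈ S} (S_J Q^α)(n,u) ⬝ ∂F/∂u_J^α(n,u)`. -/
noncomputable def prv {p q : ℕ} (Q : Fin q → DFun p q) (S : Finset (Idx p))
    (F : DFun p q) : DFun p q :=
  fun n u => ∑ α : Fin q, ∑ J ∈ S, Q α (n + J) u * pd F J α n u

/-- The difference divergence of a `p`-tuple of difference functions. -/
noncomputable def DDiv {p q : ℕ} (P : Fin p → DFun p q) : DFun p q :=
  fun n u => ∑ i : Fin p, (P i (n + Pi.single i (1 : ℤ)) u - P i n u)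

/-- The Euler–Lagrange expression `E_α(F)(n,u) = Σ_{J ∈ S} (∂F/∂u_J^α)(n−J,u)`
of a difference function `F` with stencil `S`. -/
noncomputable def EL {p q : ℕ} (S : Finset (Idx p)) (F : DFun p q) (α : Fin q) : DFun p q :=
  fun n u => ∑ J ∈ S, pd F J α (n - J) u

/-- The higher Euler operator
`E_{u_J^α}(L)(n,u) = Σ_{J0 ≥ 0} (∂L/∂u_{J0+J}^α)(n−J0,u)` for a difference
function `L` depending only on forward values, with stencil `S`
(reindexed by `K = J0 + J`; terms with `K ∉ S` vanish). -/
noncomputable def hEuler {p q : ℕ} (S : Finset (Idx p)) (L : DFun p q) (J : Idx p)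
    (α : Fin q) : DFun p q :=
  fun n u => ∑ K ∈ S.filter (fun K => J ≤ K), pd L K α (n - (K - J)) u

/-- `T^i(L)(n,u) = Σ_α Σ_{J ≥ 1_i} (S_{J−1_i} Q^α)(n,u) ⬝ E_{u_J^α}(L)(n−1_i,u)`
(a finite sum: only `J` with `1_i ≤ J ≤ K` for some stencil point `K` contribute). -/
noncomputable def TT {p q : ℕ} (Q : Fin q → DFun p q) (S : Finset (Idx p)) (i : Fin p)
    (L : DFun p q) : DFun p q :=
  fun n u => ∑ α : Fin q, ∑ J ∈ S.biUnion (fun K => Finset.Icc (Pi.single i (1 : ℤ)) K),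
    Q α (n + J - Pi.single i (1 : ℤ)) u * hEuler S L J α (n - Pi.single i (1 : ℤ)) u

theorem aux_diff {p q : ℕ} {F : DFun p q} {S : Finset (Idx p)} (hF : IsDiffFun F S)
    (n m : Idx p) (α : Fin q) (u : Fld p q) :
    Differentiable ℝ (fun t => F n (upd u m α t)) := by
  obtain ⟨G, hG, h⟩ := hF
  have h1 : (fun t => F n (upd u m α t))
      = fun t => G n (fun J β => upd u m α t (n + J.1) β) := by
    funext t; exact h n _
  rw [h1]
  have h2 : Differentiable ℝ (G n) := (hG n).differentiable (by simp)
  refine h2.comp ?_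
  rw [differentiable_pi]
  intro J
  rw [differentiable_pi]
  intro β
  unfold upd
  by_cases hc : n + J.1 = m ∧ β = α
  · simp only [hc]; simp
  · simp only [hc]; simp

theorem aux_zero {p q : ℕ} {F : DFun p q} {S : Finset (Idx p)} (hF : IsDiffFun F S)
    (J : Idx p) (hJ : J ∉ S) (n : Idx p) (α : Fin q) (u : Fld p q) :
    pd F J α n u = 0 := by
  obtain ⟨G, hG, h⟩ := hF
  unfold pd
  have h1 : (fun t => F n (upd u (n + J) α t)) = fun _ => F n u := by
    funext t
    rw [h, h]
    congr 1
    funext K β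
    unfold upd
    rw [if_neg]
    rintro ⟨h3, -⟩
    exact hJ (add_left_cancel h3 ▸ K.2)
  rw [h1]; simp

theorem aux_prv {p q : ℕ} {F : DFun p q} {S T : Finset (Idx p)} (hF : IsDiffFun F S)
    (hST : S ⊆ T) (Q : Fin q → DFun p q) (n : Idx p) (u : Fld p q) :
    prv Q S F n u = ∑ α : Fin q, ∑ J ∈ T, Q α (n + J) u * pd F J α n u := by
  unfold prv
  refine Finset.sum_congr rfl fun α _ => Finset.sum_subset hST fun J _ hJ => ?_
  rw [aux_zero hF J hJ, mul_zero]

theorem aux_prv_shift {p q : ℕ} {F : DFun p q} {S T : Finset (Idx p)} (hF : IsDiffFun F S)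
    (e : Idx p) (hST : S.image (fun J => J + e) ⊆ T)
    (Q : Fin q → DFun p q) (n : Idx p) (u : Fld p q) :
    prv Q S F (n + e) u
      = ∑ α : Fin q, ∑ J ∈ T, Q α (n + J) u * pd F (J - e) α (n + e) u := by
  unfold prv
  refine Finset.sum_congr rfl fun α _ => ?_
  rw [← Finset.sum_subset hST, Finset.sum_image]
  · refine Finset.sum_congr rfl fun J _ => ?_
    rw [add_sub_cancel_right, add_assoc, add_comm e J]
  · intro a _ b _ h; exact add_right_cancel h
  · intro J _ hJ
    rw [aux_zero hF (J - e), mul_zero]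
    intro h
    exact hJ (Finset.mem_image.2 ⟨_, h, sub_add_cancel _ _⟩)

theorem aux_div {p q : ℕ} (P : Fin p → DFun p q) (S : Fin p → Finset (Idx p))
    (hP : ∀ i, IsDiffFun (P i) (S i)) (J : Idx p) (α : Fin q) (n : Idx p) (u : Fld p q) :
    pd (DDiv P) J α n u = ∑ i : Fin p,
      (pd (P i) (J - Pi.single i (1 : ℤ)) α (n + Pi.single i (1 : ℤ)) u - pd (P i) J α n u) := by
  unfold pd DDiv
  have h : ∀ i : Fin p, n + Pi.single i (1 : ℤ) + (J - Pi.single i (1 : ℤ)) = n + J := by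
    intro i; abel
  simp only [h]
  rw [deriv_fun_sum]
  · refine Finset.sum_congr rfl fun i _ => ?_
    exact deriv_fun_sub (aux_diff (hP i) _ _ _ _ _) (aux_diff (hP i) _ _ _ _ _)
  · intro i _
    exact (aux_diff (hP i) _ _ _ _ _).sub (aux_diff (hP i) _ _ _ _ _)

/-- The difference divergence operator commutes with any
prolonged vector field: for every `p`-tuple `P` of difference functions and
every characteristic `Q`, and all `n`, `u`,
`Σ_i [(pr v P^i)(n+1_i,u) − (pr v P^i)(n,u)] = (pr v (Div P))(n,u)`.
(The stencil of `Div P` is the union of the stencils of the `P^i` and their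
translates by `1_i`.) -/
theorem stmt_2 {p q : ℕ} (hp : 1 ≤ p) (hq : 1 ≤ q)
    (P : Fin p → DFun p q) (S : Fin p → Finset (Idx p))
    (hP : ∀ i, IsDiffFun (P i) (S i))
    (Q : Fin q → DFun p q) (SQ : Finset (Idx p)) (hQ : ∀ α, IsDiffFun (Q α) SQ)
    (n : Idx p) (u : Fld p q) :
    ∑ i : Fin p,
        (prv Q (S i) (P i) (n + Pi.single i (1 : ℤ)) u - prv Q (S i) (P i) n u)
      = prv Q
          (Finset.univ.biUnion fun i =>
            S i ∪ (S i).image (fun J => J + Pi.single i (1 : ℤ)))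
          (DDiv P) n u := by
  have hsub : ∀ i, S i ∪ (S i).image (fun J => J + Pi.single i (1 : ℤ)) ⊆
      (Finset.univ.biUnion fun i =>
        S i ∪ (S i).image (fun J => J + Pi.single i (1 : ℤ))) := fun i =>
    fun J hJ => Finset.mem_biUnion.2 ⟨i, Finset.mem_univ i, hJ⟩
  generalize (Finset.univ.biUnion fun i =>
        S i ∪ (S i).image (fun J => J + Pi.single i (1 : ℤ))) = T at hsub ⊢
  have h1 : ∀ i, prv Q (S i) (P i) (n + Pi.single i (1 : ℤ)) u - prv Q (S i) (P i) n u
      = ∑ α : Fin q, ∑ J ∈ T, Q α (n + J) u *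
        (pd (P i) (J - Pi.single i (1 : ℤ)) α (n + Pi.single i (1 : ℤ)) u
          - pd (P i) J α n u) := by
    intro i
    rw [aux_prv_shift (hP i) _ (Finset.subset_union_right.trans (hsub i)),
      aux_prv (hP i) (Finset.subset_union_left.trans (hsub i))]
    simp only [mul_sub, Finset.sum_sub_distrib]
  simp only [h1]
  rw [Finset.sum_comm]
  unfold prv
  refine Finset.sum_congr rfl fun α _ => ?_
  rw [Finset.sum_comm]
  refine Finset.sum_congr rfl fun J _ => ?_
  rw [aux_div P S hP, Finset.mul_sum]
end

section
/- Change of variables formula for the difference Euler–Lagrange operator under point transformations: let φ : ℤ^p × ℝ^q → ℝ^q be smooth in its second argument, acting pointwise on fields by (φ∘u)(m) = φ(m, u(m)). For any difference function L (viewed as a function of the v-variables) define the difference function L̃ by L̃(n,u) = L(n, φ∘u). Then for every component index α and all n, u: E_{u^α}(L̃)(n,u) = Σ_{β=1}^q (∂φ^β/∂u^α)(n, u(n)) · E_{v^β}(L)(n, φ∘u), where E_{v^β}(L) is the Euler–Lagrange expression of L in the v-variables. -/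
open scoped Classical

theorem upd_eq_update {p q : ℕ} (v : Fld p q) (m : Idx p) (β : Fin q) (t : ℝ) :
    upd v m β t = Function.update v m (Function.update (v m) β t) := by
  funext m' γ
  by_cases h : m' = m
  · subst h
    by_cases h2 : γ = β
    · subst h2; simp [upd]
    · simp [upd, h2]
  · simp [upd, h]

theorem hasDerivAt_pt {q : ℕ} (H : (Fin q → ℝ) → ℝ) (hH : Differentiable ℝ H)
    (f : ℝ → Fin q → ℝ) (f' : Fin q → ℝ) (t : ℝ) (hf : HasDerivAt f f' t) :
    HasDerivAt (fun s => H (f s)) (∑ β, f' β * fderiv ℝ H (f t) (Pi.single β 1)) t := by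
  have h := (hH (f t)).hasFDerivAt.comp_hasDerivAt t hf
  have e : fderiv ℝ H (f t) f' = ∑ β, f' β * fderiv ℝ H (f t) (Pi.single β 1) := by
    conv_lhs => rw [pi_eq_sum_univ' f']
    rw [map_sum]
    refine Finset.sum_congr rfl fun β _ => ?_
    rw [map_smul, smul_eq_mul]
  rw [e] at h
  exact h

theorem pd_chain {p q : ℕ} (L : DFun p q) (S : Finset (Idx p)) (hL : IsDiffFun L S)
    (φ : Idx p → (Fin q → ℝ) → (Fin q → ℝ)) (hφ : ∀ m, ContDiff ℝ (⊤ : ℕ∞) (φ m))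
    (α : Fin q) (k J : Idx p) (u : Fld p q) :
    pd (fun n' u' => L n' (fun m => φ m (u' m))) J α k u
      = ∑ β : Fin q,
          deriv (fun t => φ (k + J) (Function.update (u (k + J)) α t) β) (u (k + J) α)
            * pd L J β k (fun m => φ m (u m)) := by
  obtain ⟨G, hG, hLG⟩ := hL
  unfold pd
  generalize k + J = n
  set v : Fld p q := fun m => φ m (u m) with hv
  set H : (Fin q → ℝ) → ℝ := fun w => L k (Function.update v n w) with hHdef
  have hH : Differentiable ℝ H := by
    have : H = fun w => G k (fun K γ => Function.update v n w (k + K.1) γ) := by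
      funext w; rw [hHdef]; exact hLG _ _
    rw [this]
    refine ((hG k).differentiable (by simp)).comp ?_
    rw [differentiable_pi]; intro K
    rw [differentiable_pi]; intro γ
    by_cases h : k + K.1 = n
    · subst h; simp only [Function.update_self]; fun_prop
    · simp only [Function.update_of_ne h]; fun_prop
  have hup : ∀ (w : Fin q → ℝ) (β : Fin q),
      HasDerivAt (fun t => Function.update w β t) (Pi.single β 1) (w β) :=
    fun w β => hasDerivAt_update w β (w β)
  have h1 : ∀ β, deriv (fun t => L k (upd v n β t)) (v n β)
      = fderiv ℝ H (v n) (Pi.single β 1) := by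
    intro β
    have := hasDerivAt_pt H hH _ _ _ (hup (v n) β)
    simp only [upd_eq_update]
    rw [this.deriv]
    simp [Pi.single_apply]
  have hd : HasDerivAt (fun t => φ n (Function.update (u n) α t))
      (fderiv ℝ (φ n) (u n) (Pi.single α 1)) (u n α) := by
    have hφd : DifferentiableAt ℝ (φ n) (Function.update (u n) α (u n α)) :=
      (hφ n).differentiable (by simp) _
    have := hφd.hasFDerivAt.comp_hasDerivAt _ (hup (u n) α)
    rw [Function.update_eq_self] at this
    exact this
  have h2 := hasDerivAt_pt H hH _ _ _ hd
  have h3 : (fun t => L k (fun m => φ m (upd u n α t m)))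
      = fun t => H (φ n (Function.update (u n) α t)) := by
    funext t
    rw [hHdef, upd_eq_update]
    simp only
    congr 1
    funext m
    by_cases h : m = n
    · subst h; simp
    · simp [h, hv]
  rw [h3, h2.deriv]
  refine Finset.sum_congr rfl fun β _ => ?_
  rw [h1, ((hasDerivAt_pi.1 hd) β).deriv]
  simp [hv]

/-- Change of variables formula for the difference
Euler–Lagrange operator under point transformations: let `φ : ℤ^p × ℝ^q → ℝ^q`
be smooth in its second argument, acting pointwise on fields by
`(φ∘u)(m) = φ(m, u(m))`.  For a difference function `L` (in the `v`-variables)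
define `L̃(n,u) = L(n, φ∘u)`.  Then
`E_{u^α}(L̃)(n,u) = Σ_β (∂φ^β/∂u^α)(n, u(n)) ⬝ E_{v^β}(L)(n, φ∘u)`. -/
theorem stmt_4 {p q : ℕ} (hp : 1 ≤ p) (hq : 1 ≤ q)
    (L : DFun p q) (S : Finset (Idx p)) (hL : IsDiffFun L S)
    (φ : Idx p → (Fin q → ℝ) → (Fin q → ℝ)) (hφ : ∀ m, ContDiff ℝ (⊤ : ℕ∞) (φ m))
    (α : Fin q) (n : Idx p) (u : Fld p q) :
    EL S (fun n' u' => L n' (fun m => φ m (u' m))) α n u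
      = ∑ β : Fin q,
          deriv (fun t => φ n (Function.update (u n) α t) β) (u n α)
            * EL S L β n (fun m => φ m (u m)) := by
  unfold EL
  simp only [pd_chain L S hL φ hφ, sub_add_cancel, Finset.mul_sum]
  exact Finset.sum_comm
end

section
/- For any difference Lagrangian L and any characteristic Q, and for every component index α, every n ∈ ℤ^p, and every field u : ℤ^p → ℝ^q, the following identity holds: E_α(pr v(L))(n,u) = (pr v(E_α(L)))(n,u) + Σ_{β=1}^q Σ_J (∂Q^β/∂u_J^α)(n−J,u) · E_β(L)(n−J,u), where the last sum runs over the (finite) stencil of Q. -/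
open scoped Classical

/-- Derivative of a functional of the field with respect to the value `u^α(m)`. -/
noncomputable def DD {p q : ℕ} (m : Idx p) (α : Fin q) (f : Fld p q → ℝ) : Fld p q → ℝ :=
  fun u => deriv (fun t => f (upd u m α t)) (u m α)

/-- Restriction of a field to a finite set of lattice points. -/
def rst {p q : ℕ} (A : Finset (Idx p)) (u : Fld p q) : {J // J ∈ A} → Fin q → ℝ :=
  fun J => u J.1

/-- The unit field at `(m, α)`. -/
noncomputable def uf {p q : ℕ} (m : Idx p) (α : Fin q) : Fld p q :=
  fun m' β => if m' = m ∧ β = α then 1 else 0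

/-- Smooth functionals depending only on values at `A`. -/
def Sm {p q : ℕ} (A : Finset (Idx p)) (f : Fld p q → ℝ) : Prop :=
  ∃ G : ({J // J ∈ A} → Fin q → ℝ) → ℝ, ContDiff ℝ (⊤ : ℕ∞) G ∧ ∀ u, f u = G (rst A u)

lemma rst_upd {p q : ℕ} (A : Finset (Idx p)) (u : Fld p q) (m : Idx p) (α : Fin q) (t : ℝ) :
    rst A (upd u m α t) = rst A u + (t - u m α) • rst A (uf m α) := by
  funext J β
  simp only [rst, upd, uf, Pi.add_apply, Pi.smul_apply, smul_eq_mul]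
  split_ifs with h
  · rw [h.1, h.2]; ring
  · ring

lemma hasDeriv_aux {p q : ℕ} (A : Finset (Idx p)) (G : ({J // J ∈ A} → Fin q → ℝ) → ℝ)
    (hG : ContDiff ℝ (⊤ : ℕ∞) G) (u : Fld p q) (m : Idx p) (α : Fin q) :
    HasDerivAt (fun t => G (rst A (upd u m α t)))
      (fderiv ℝ G (rst A u) (rst A (uf m α))) (u m α) := by
  have hd : HasFDerivAt G (fderiv ℝ G (rst A u)) (rst A u) :=
    ((hG.differentiable (by simp)) _).hasFDerivAt
  simp only [rst_upd]
  have hl : HasDerivAt (fun t : ℝ => rst A u + (t - u m α) • rst A (uf m α))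
      (rst A (uf m α)) (u m α) := by
    have := (((hasDerivAt_id (u m α)).sub_const (u m α)).smul_const
      (rst A (uf m α))).const_add (rst A u)
    simpa using this
  refine HasFDerivAt.comp_hasDerivAt (u m α) ?_ hl
  simpa using hd

lemma DD_eq {p q : ℕ} (A : Finset (Idx p)) (f : Fld p q → ℝ)
    (G : ({J // J ∈ A} → Fin q → ℝ) → ℝ)
    (hG : ContDiff ℝ (⊤ : ℕ∞) G) (h : ∀ u, f u = G (rst A u)) (u : Fld p q) (m : Idx p)
    (α : Fin q) : DD m α f u = fderiv ℝ G (rst A u) (rst A (uf m α)) := by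
  unfold DD
  simp only [h]
  exact (hasDeriv_aux A G hG u m α).deriv

lemma Sm.hasDeriv {p q : ℕ} {A : Finset (Idx p)} {f : Fld p q → ℝ} (hf : Sm A f)
    (m : Idx p) (α : Fin q) (u : Fld p q) :
    HasDerivAt (fun t => f (upd u m α t)) (DD m α f u) (u m α) := by
  obtain ⟨G, hG, h⟩ := hf
  rw [DD_eq A f G hG h]
  simp only [h]
  exact hasDeriv_aux A G hG u m α

lemma smooth_aux {p q : ℕ} {A : Finset (Idx p)} {G : ({J // J ∈ A} → Fin q → ℝ) → ℝ}
    (hG : ContDiff ℝ (⊤ : ℕ∞) G) (v : {J // J ∈ A} → Fin q → ℝ) :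
    ContDiff ℝ (⊤ : ℕ∞) (fun x => fderiv ℝ G x v) :=
  (hG.fderiv_right (m := ((⊤ : ℕ∞) : WithTop ℕ∞)) (by simp)).clm_apply contDiff_const

lemma Sm.DD {p q : ℕ} {A : Finset (Idx p)} {f : Fld p q → ℝ} (hf : Sm A f)
    (m : Idx p) (α : Fin q) : Sm A (DD m α f) := by
  obtain ⟨G, hG, h⟩ := hf
  exact ⟨fun x => fderiv ℝ G x (rst A (uf m α)), smooth_aux hG _,
    fun u => DD_eq A f G hG h u m α⟩

lemma Sm.DD_zero {p q : ℕ} {A : Finset (Idx p)} {f : Fld p q → ℝ} (hf : Sm A f)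
    {m : Idx p} (hm : m ∉ A) (α : Fin q) (u : Fld p q) : _root_.DD m α f u = 0 := by
  obtain ⟨G, hG, h⟩ := hf
  rw [DD_eq A f G hG h]
  have : rst A (uf m α) = 0 := by
    funext J β
    have : J.1 ≠ m := fun e => hm (e ▸ J.2)
    simp [rst, uf, this]
  rw [this, map_zero]

lemma Sm.DD_comm {p q : ℕ} {A : Finset (Idx p)} {f : Fld p q → ℝ} (hf : Sm A f)
    (m k : Idx p) (α β : Fin q) (u : Fld p q) :
    _root_.DD m α (_root_.DD k β f) u = _root_.DD k β (_root_.DD m α f) u := by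
  obtain ⟨G, hG, h⟩ := hf
  rw [DD_eq A _ _ (smooth_aux hG _) (fun u => DD_eq A f G hG h u k β),
    DD_eq A _ _ (smooth_aux hG _) (fun u => DD_eq A f G hG h u m α)]
  have hd : DifferentiableAt ℝ (fderiv ℝ G) (rst A u) :=
    ((hG.fderiv_right (m := ((⊤ : ℕ∞) : WithTop ℕ∞)) (by simp)).differentiable (by simp)) _
  have key : ∀ v w, fderiv ℝ (fun x => fderiv ℝ G x v) (rst A u) w
      = fderiv ℝ (fderiv ℝ G) (rst A u) w v := by
    intro v w
    have := (hd.hasFDerivAt.clm_apply (hasFDerivAt_const v (rst A u))).fderiv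
    rw [this]; simp
  rw [key, key]
  have hs : IsSymmSndFDerivAt ℝ G (rst A u) :=
    hG.contDiffAt.isSymmSndFDerivAt (by
      simp only [minSmoothness_of_isRCLikeNormedField]
      exact WithTop.coe_le_coe.2 (le_top : (2 : ℕ∞) ≤ ⊤))
  exact hs _ _

lemma IsDiffFun.sm {p q : ℕ} {F : DFun p q} {S : Finset (Idx p)} (h : IsDiffFun F S)
    (n : Idx p) : Sm (S.image fun J => n + J) (F n) := by
  obtain ⟨G, hG, h⟩ := h
  refine ⟨fun x => G n (fun J => x ⟨n + J.1, Finset.mem_image_of_mem _ J.2⟩), ?_, ?_⟩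
  · refine (hG n).comp ?_
    fun_prop
  · intro u
    exact h n u

lemma pd_eq {p q : ℕ} (F : DFun p q) (J : Idx p) (α : Fin q) (n : Idx p) :
    pd F J α n = DD (n + J) α (F n) := rfl

lemma sum_shift {p : ℕ} (S T : Finset (Idx p)) (g : Idx p → ℝ) (J : Idx p)
    (h1 : ∀ K ∈ S, J + K ∈ T) (h2 : ∀ M ∈ T, M - J ∉ S → g M = 0) :
    ∑ M ∈ T, g M = ∑ K ∈ S, g (J + K) := by
  symm
  refine Finset.sum_of_injOn (fun K => J + K) (fun a _ b _ h => by simpa using h) h1 ?_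
    (fun _ _ => rfl)
  intro M hM hn
  refine h2 M hM fun hh => hn ⟨M - J, hh, by simp⟩

/-- For any difference Lagrangian `L` and any characteristic
`Q`, and all `α`, `n`, `u`:
`E_α(pr v(L))(n,u) = (pr v(E_α(L)))(n,u) + Σ_β Σ_J (∂Q^β/∂u_J^α)(n−J,u) ⬝ E_β(L)(n−J,u)`,
the last sum running over the stencil of `Q`.  (The stencil of `pr v(L)` is
`S ∪ {J + K : J ∈ S, K ∈ SQ}` and the stencil of `E_α(L)` is
`{K − J : J, K ∈ S}`.) -/
theorem stmt_6 {p q : ℕ} (hp : 1 ≤ p) (hq : 1 ≤ q)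
    (L : DFun p q) (S : Finset (Idx p)) (hL : IsDiffFun L S)
    (hS : ∀ K ∈ S, (0 : Idx p) ≤ K)
    (Q : Fin q → DFun p q) (SQ : Finset (Idx p)) (hQ : ∀ α, IsDiffFun (Q α) SQ)
    (α : Fin q) (n : Idx p) (u : Fld p q) :
    EL (S ∪ S.biUnion fun J => SQ.image fun K => J + K) (prv Q S L) α n u
      = prv Q (S.biUnion fun J => S.image fun K => K - J) (EL S L α) n u
        + ∑ β : Fin q, ∑ J ∈ SQ, pd (Q β) J α (n - J) u * EL S L β (n - J) u := by
  have hL0 : ∀ M J : Idx p, J ∉ S → ∀ m β v, m = n - M + J → DD m β (L (n - M)) v = 0 := by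
    intro M J hJ m β v hm
    refine (hL.sm (n - M)).DD_zero ?_ β v
    intro h
    obtain ⟨K, hK, e⟩ := Finset.mem_image.1 h
    rw [hm] at e
    exact hJ (add_left_cancel e ▸ hK)
  have hQ0 : ∀ β, ∀ M K : Idx p, K ∉ SQ → ∀ m γ v, m = M + K → DD m γ (Q β M) v = 0 := by
    intro β M J hJ m γ v hm
    refine ((hQ β).sm M).DD_zero ?_ γ v
    simpa [hm] using hJ
  -- left-hand side
  have hl : ∀ M, pd (prv Q S L) M α (n - M) u = ∑ β : Fin q, ∑ J ∈ S,
      (DD n α (Q β (n - M + J)) u * DD (n - M + J) β (L (n - M)) u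
        + Q β (n - M + J) u * DD n α (DD (n - M + J) β (L (n - M))) u) := by
    intro M
    have hself : upd u n α (u n α) = u := by
      funext m γ
      simp only [upd]
      split_ifs with h
      · rw [h.1, h.2]
      · rfl
    simp only [pd_eq, sub_add_cancel]
    refine HasDerivAt.deriv ?_
    simp only [prv, pd_eq]
    refine HasDerivAt.fun_sum fun β _ => HasDerivAt.fun_sum fun J _ => ?_
    have := (((hQ β).sm (n - M + J)).hasDeriv n α u).fun_mul
      (((hL.sm (n - M)).DD (n - M + J) β).hasDeriv n α u)
    rw [hself] at this
    exact this
  have hr : ∀ β K, pd (EL S L α) K β n u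
      = ∑ M ∈ S, DD (n + K) β (DD n α (L (n - M))) u := by
    intro β K
    rw [pd_eq]
    refine HasDerivAt.deriv ?_
    simp only [EL, pd_eq, sub_add_cancel]
    exact HasDerivAt.fun_sum fun M _ => ((hL.sm (n - M)).DD n α).hasDeriv (n + K) β u
  set T := S ∪ S.biUnion fun J => SQ.image fun K => J + K with hT
  set T2 := S.biUnion fun J => S.image fun K => K - J with hT2
  have hTS : ∀ J ∈ S, J ∈ T := fun J h => Finset.mem_union_left _ h
  have hTSQ : ∀ J ∈ S, ∀ K ∈ SQ, J + K ∈ T := fun J h K hK =>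
    Finset.mem_union_right _ (Finset.mem_biUnion.2 ⟨J, h, Finset.mem_image_of_mem _ hK⟩)
  have hT2S : ∀ M ∈ S, ∀ J ∈ S, -M + J ∈ T2 := fun M h K hK =>
    Finset.mem_biUnion.2 ⟨M, h, Finset.mem_image.2 ⟨K, hK, by abel⟩⟩
  -- first part
  have e1 : ∀ β, ∀ J ∈ S,
      ∑ M ∈ T, DD n α (Q β (n - M + J)) u * DD (n - M + J) β (L (n - M)) u
      = ∑ K ∈ SQ, DD n α (Q β (n - K)) u * DD (n - K) β (L (n - K - J)) u := by
    intro β J hJ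
    rw [sum_shift SQ T _ J (hTSQ J hJ)]
    · refine Finset.sum_congr rfl fun K _ => ?_
      rw [show n - (J + K) + J = n - K by abel, show n - (J + K) = n - K - J by abel]
    · intro M _ hM
      rw [hQ0 β (n - M + J) (M - J) hM n α u (by abel), zero_mul]
  have e2 : ∀ β, ∀ J ∈ S,
      ∑ M ∈ T, Q β (n - M + J) u * DD n α (DD (n - M + J) β (L (n - M))) u
      = ∑ M ∈ S, Q β (n - M + J) u * DD n α (DD (n - M + J) β (L (n - M))) u := by
    intro β J hJ
    symm
    refine Finset.sum_subset hTS fun M _ hM => ?_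
    have : DD n α (DD (n - M + J) β (L (n - M))) u = 0 := by
      refine ((hL.sm (n - M)).DD _ β).DD_zero ?_ α u
      intro h
      obtain ⟨K, hK, e⟩ := Finset.mem_image.1 h
      have : K = M := by
        have e' : n - M + K = n - M + M := by rw [e]; abel
        exact add_left_cancel e'
      exact hM (this ▸ hK)
    rw [this, mul_zero]
  have e3 : ∀ β, ∀ M ∈ S,
      ∑ K ∈ T2, Q β (n + K) u * DD (n + K) β (DD n α (L (n - M))) u
      = ∑ J ∈ S, Q β (n - M + J) u * DD n α (DD (n - M + J) β (L (n - M))) u := by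
    intro β M hM
    rw [sum_shift S T2 _ (-M) (hT2S M hM)]
    · refine Finset.sum_congr rfl fun J _ => ?_
      rw [show n + (-M + J) = n - M + J by abel, (hL.sm (n - M)).DD_comm]
    · intro K _ hK
      have : DD (n + K) β (DD n α (L (n - M))) u = 0 := by
        rw [(hL.sm (n - M)).DD_comm]
        have : DD (n + K) β (L (n - M)) = fun _ => 0 := by
          funext v
          exact hL0 M (K - -M) hK _ β v (by abel)
        rw [this]
        simp [DD]
      rw [this, mul_zero]
  have lhs : EL T (prv Q S L) α n u = ∑ β : Fin q, (∑ J ∈ S, ∑ K ∈ SQ,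
      DD n α (Q β (n - K)) u * DD (n - K) β (L (n - K - J)) u
      + ∑ J ∈ S, ∑ M ∈ S, Q β (n - M + J) u * DD n α (DD (n - M + J) β (L (n - M))) u) := by
    simp only [EL, hl]
    rw [Finset.sum_comm]
    refine Finset.sum_congr rfl fun β _ => ?_
    rw [Finset.sum_comm, ← Finset.sum_add_distrib]
    refine Finset.sum_congr rfl fun J hJ => ?_
    rw [Finset.sum_add_distrib, e1 β J hJ, e2 β J hJ]
  rw [lhs, Finset.sum_add_distrib, add_comm]
  congr 1
  · simp only [prv, hr, Finset.mul_sum]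
    refine Finset.sum_congr rfl fun β _ => ?_
    rw [Finset.sum_comm, Finset.sum_comm (s := T2)]
    exact Finset.sum_congr rfl fun M hM => (e3 β M hM).symm
  · refine Finset.sum_congr rfl fun β _ => ?_
    rw [Finset.sum_comm]
    refine Finset.sum_congr rfl fun K _ => ?_
    simp only [EL, pd_eq, Finset.mul_sum, sub_add_cancel]
end

section
/- Theorem: let Q be a Lie point characteristic that generates variational symmetries of the difference Lagrangian L, i.e. (pr v L)(n,u) = 0 for all n and u. Then the prolonged vector field annihilates each component of the associated Noether conservation law: (pr v(T^i(L)))(n,u) = 0 for every i ∈ {1,…,p}, every n ∈ ℤ^p, and every field u : ℤ^p → ℝ^q. -/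
open scoped Classical

/-- Abstract commutation argument. -/
theorem aux_core {E : Type*} [NormedAddCommGroup E] [NormedSpace ℝ E]
    (f : E → ℝ) (X : E → E) (P : E →L[ℝ] E)
    (hf : ContDiff ℝ (⊤ : ℕ∞) f) (hX : ContDiff ℝ (⊤ : ℕ∞) X)
    (hc : ∀ x v, fderiv ℝ X x (P v) = P (fderiv ℝ X x v))
    (h0 : ∀ x, fderiv ℝ f x (X x) = 0) (x : E) :
    HasFDerivAt (fun y => fderiv ℝ f y (P (X y)))
      (fderiv ℝ (fun y => fderiv ℝ f y (P (X y))) x) x ∧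
    fderiv ℝ (fun y => fderiv ℝ f y (P (X y))) x (X x) = 0 := by
  have hfd : HasFDerivAt (fderiv ℝ f) (fderiv ℝ (fderiv ℝ f) x) x := by
    have : ContDiff ℝ 1 (fderiv ℝ f) := hf.fderiv_right (by norm_cast)
    exact (this.differentiable (by norm_num) x).hasFDerivAt
  have hXd : HasFDerivAt X (fderiv ℝ X x) x :=
    (hX.differentiable (by norm_num) x).hasFDerivAt
  have h1 := hfd.clm_apply hXd
  have hPX : HasFDerivAt (fun y => P (X y)) (P.comp (fderiv ℝ X x)) x :=
    P.hasFDerivAt.comp x hXd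
  have h2 := hfd.clm_apply hPX
  refine ⟨h2.differentiableAt.hasFDerivAt, ?_⟩
  rw [h2.fderiv]
  have h3 : (fun y => fderiv ℝ f y (X y)) = fun _ => 0 := funext h0
  rw [h3] at h1
  have h4 := h1.unique (hasFDerivAt_const (0 : ℝ) x)
  have h5 := congrArg (fun T => T (P (X x))) h4
  have hsymm : IsSymmSndFDerivAt ℝ f x := by
    apply ContDiffAt.isSymmSndFDerivAt (n := ((⊤ : ℕ∞) : WithTop ℕ∞)) hf.contDiffAt
    simp only [minSmoothness_of_isRCLikeNormedField]
    exact WithTop.coe_le_coe.2 (le_top : (2 : ℕ∞) ≤ ⊤)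
  have h6 := hsymm (X x) (P (X x))
  simp only [ContinuousLinearMap.add_apply, ContinuousLinearMap.comp_apply,
    ContinuousLinearMap.flip_apply, ContinuousLinearMap.zero_apply] at h5 ⊢
  rw [hc] at h5
  rw [h6]
  exact h5

/-- Extension of values on a finite set `B` by the field `u`. -/
noncomputable def auxExt {p q : ℕ} (u : Fld p q) (B : Finset (Idx p))
    (x : {b // b ∈ B} → Fin q → ℝ) : Fld p q :=
  fun m β => if h : m ∈ B then x ⟨m, h⟩ β else u m β

theorem auxExt_mem {p q : ℕ} (u : Fld p q) (B : Finset (Idx p))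
    (x : {b // b ∈ B} → Fin q → ℝ) (b : {b // b ∈ B}) : auxExt u B x b.1 = x b := by
  funext β
  simp [auxExt]

theorem auxExt_contDiff {p q : ℕ} (u : Fld p q) (B : Finset (Idx p))
    (F : DFun p q) (S : Finset (Idx p)) (hF : IsDiffFun F S) (n : Idx p) :
    ContDiff ℝ (⊤ : ℕ∞) (fun x => F n (auxExt u B x)) := by
  obtain ⟨G, hG, hGF⟩ := hF
  simp only [hGF]
  refine (hG n).comp ?_
  refine contDiff_pi.2 fun J => contDiff_pi.2 fun α => ?_
  unfold auxExt
  by_cases h : n + J.1 ∈ B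
  · simp only [h, dite_true]
    fun_prop
  · simp only [h, dite_false]
    fun_prop

theorem aux_pd {p q : ℕ} (u : Fld p q) (B : Finset (Idx p))
    (F : DFun p q) (n J : Idx p) (α : Fin q) (hJ : n + J ∈ B)
    (x : {b // b ∈ B} → Fin q → ℝ)
    (hF : DifferentiableAt ℝ (fun x => F n (auxExt u B x)) x) :
    pd F J α n (auxExt u B x) =
      fderiv ℝ (fun x => F n (auxExt u B x)) x
        (Pi.single ⟨n + J, hJ⟩ (Pi.single α 1)) := by
  unfold pd
  set e : {b // b ∈ B} → Fin q → ℝ := Pi.single ⟨n + J, hJ⟩ (Pi.single α 1) with he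
  have hx : auxExt u B x (n + J) α = x ⟨n + J, hJ⟩ α := by simp [auxExt, hJ]
  rw [hx]
  have hupd : ∀ t, upd (auxExt u B x) (n + J) α t
      = auxExt u B (x + (t - x ⟨n + J, hJ⟩ α) • e) := by
    intro t
    funext m β
    unfold upd auxExt
    by_cases hm : m = n + J
    · subst hm
      by_cases hβ : β = α
      · subst hβ; simp [hJ, he]
      · simp [hJ, he, hβ]
    · by_cases hmB : m ∈ B
      · have : (⟨m, hmB⟩ : {b // b ∈ B}) ≠ ⟨n + J, hJ⟩ := by
          simpa using hm
        simp [hm, hmB, he, Pi.single_eq_of_ne this]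
      · simp [hm, hmB]
  simp only [hupd]
  have hline : HasDerivAt (fun t : ℝ => x + (t - x ⟨n + J, hJ⟩ α) • e) e (x ⟨n + J, hJ⟩ α) := by
    have := (((hasDerivAt_id (x ⟨n + J, hJ⟩ α)).sub_const (x ⟨n + J, hJ⟩ α)).smul_const e).const_add x
    simpa using this
  have hF' : HasFDerivAt (fun x => F n (auxExt u B x))
      (fderiv ℝ (fun x => F n (auxExt u B x)) x)
      (x + (x ⟨n + J, hJ⟩ α - x ⟨n + J, hJ⟩ α) • e) := by
    simpa using hF.hasFDerivAt
  exact (hF'.comp_hasDerivAt _ hline).deriv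

/-- The vector field on the finite-dimensional space. -/
noncomputable def auxX {p q : ℕ} (Q : Fin q → DFun p q) (u : Fld p q) (B : Finset (Idx p))
    (x : {b // b ∈ B} → Fin q → ℝ) : {b // b ∈ B} → Fin q → ℝ :=
  fun b α => Q α b.1 (auxExt u B x)

/-- Coordinate projection. -/
noncomputable def auxP {p : ℕ} (q : ℕ) (B : Finset (Idx p)) (A : Finset (Idx p)) :
    ({b // b ∈ B} → Fin q → ℝ) →L[ℝ] ({b // b ∈ B} → Fin q → ℝ) :=
  ContinuousLinearMap.pi fun b =>
    if b.1 ∈ A then ContinuousLinearMap.proj b else 0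

theorem auxP_apply {p q : ℕ} (B A : Finset (Idx p)) (v : {b // b ∈ B} → Fin q → ℝ)
    (b : {b // b ∈ B}) : auxP q B A v b = if b.1 ∈ A then v b else 0 := by
  unfold auxP
  rw [ContinuousLinearMap.pi_apply]
  split_ifs <;> simp

theorem aux_partial {p q : ℕ} (Q : Fin q → DFun p q) (u : Fld p q) (B : Finset (Idx p))
    (F : DFun p q) (n : Idx p) (S : Finset (Idx p)) (hB : ∀ J ∈ S, n + J ∈ B)
    (x : {b // b ∈ B} → Fin q → ℝ)
    (hF : DifferentiableAt ℝ (fun x => F n (auxExt u B x)) x) :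
    ∑ α : Fin q, ∑ J ∈ S, Q α (n + J) (auxExt u B x) * pd F J α n (auxExt u B x) =
      fderiv ℝ (fun x => F n (auxExt u B x)) x
        (auxP q B (S.image (fun J => n + J)) (auxX Q u B x)) := by
  have hdec : auxP q B (S.image (fun J => n + J)) (auxX Q u B x) =
      ∑ α : Fin q, ∑ J ∈ S.attach, Q α (n + J.1) (auxExt u B x) •
        (Pi.single (⟨n + J.1, hB J.1 J.2⟩ : {b // b ∈ B}) (Pi.single α (1 : ℝ)) :
          {b // b ∈ B} → Fin q → ℝ) := by
    funext b β
    rw [auxP_apply]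
    simp only [Finset.sum_apply, Pi.smul_apply, smul_eq_mul]
    by_cases hb : b.1 ∈ S.image (fun J => n + J)
    · rw [if_pos hb]
      obtain ⟨J, hJ, hJb⟩ := Finset.mem_image.1 hb
      have hbJ : b = ⟨n + J, hB J hJ⟩ := Subtype.ext hJb.symm
      subst hbJ
      rw [Finset.sum_eq_single β, Finset.sum_eq_single ⟨J, hJ⟩]
      · simp [auxX]
      · intro K _ hK
        have : (⟨n + J, hB J hJ⟩ : {b // b ∈ B}) ≠ ⟨n + K.1, hB K.1 K.2⟩ := by
          intro h
          apply hK
          apply Subtype.ext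
          simpa using (congrArg Subtype.val h).symm
        rw [Pi.single_eq_of_ne this]
        simp
      · simp
      · intro α _ hα
        apply Finset.sum_eq_zero
        intro K _
        by_cases h : (⟨n + J, hB J hJ⟩ : {b // b ∈ B}) = ⟨n + K.1, hB K.1 K.2⟩
        · rw [h]
          simp [Pi.single_eq_of_ne hα.symm]
        · rw [Pi.single_eq_of_ne h]
          simp
      · simp
    · rw [if_neg hb]
      symm
      refine Finset.sum_eq_zero fun α _ => Finset.sum_eq_zero fun K _ => ?_
      have : b ≠ ⟨n + K.1, hB K.1 K.2⟩ := by
        intro h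
        exact hb (Finset.mem_image.2 ⟨K.1, K.2, (congrArg Subtype.val h).symm⟩)
      rw [Pi.single_eq_of_ne this]
      simp
  rw [hdec, map_sum]
  refine Finset.sum_congr rfl fun α _ => ?_
  rw [map_sum, ← Finset.sum_attach]
  refine Finset.sum_congr rfl fun J _ => ?_
  rw [map_smul, smul_eq_mul, aux_pd u B F n J.1 α (hB J.1 J.2) x hF]

theorem aux_full {p q : ℕ} (Q : Fin q → DFun p q) (u : Fld p q) (B : Finset (Idx p))
    (F : DFun p q) (n : Idx p) (S : Finset (Idx p)) (hFS : IsDiffFun F S)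
    (hB : ∀ J ∈ S, n + J ∈ B)
    (x : {b // b ∈ B} → Fin q → ℝ) :
    prv Q S F n (auxExt u B x) =
      fderiv ℝ (fun x => F n (auxExt u B x)) x (auxX Q u B x) := by
  have hd := (auxExt_contDiff u B F S hFS n).differentiable (by norm_num) x
  unfold prv
  rw [aux_partial Q u B F n S hB x hd]
  set P := auxP q B (S.image (fun J => n + J)) with hP
  set v := auxX Q u B x
  have hconst : ∀ y, F n (auxExt u B y) = F n (auxExt u B (P y)) := by
    intro y
    obtain ⟨G, hG, hGF⟩ := hFS
    rw [hGF, hGF]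
    congr 1
    funext J α
    have hJ := hB J.1 J.2
    have h1 := auxExt_mem u B y ⟨_, hJ⟩
    have h2 := auxExt_mem u B (P y) ⟨_, hJ⟩
    simp only at h1 h2
    rw [h1, h2, hP, auxP_apply, if_pos (Finset.mem_image.2 ⟨J.1, J.2, rfl⟩)]
  have hPP : ∀ y, P (P y) = P y := by
    intro y
    funext b
    simp only [hP, auxP_apply]
    split_ifs <;> rfl
  have hd2 := (auxExt_contDiff u B F S hFS n).differentiable (by norm_num) (P x)
  have hcomp : HasFDerivAt (fun y => F n (auxExt u B y))
      ((fderiv ℝ (fun x => F n (auxExt u B x)) (P x)).comp P) x := by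
    have := hd2.hasFDerivAt.comp x P.hasFDerivAt
    refine this.congr_of_eventuallyEq (Filter.Eventually.of_forall fun y => ?_)
    exact hconst y
  rw [hcomp.fderiv]
  simp [hPP]

theorem auxX_contDiff {p q : ℕ} (Q : Fin q → DFun p q)
    (hQ : ∀ α, IsDiffFun (Q α) ({(0 : Idx p)} : Finset (Idx p))) (u : Fld p q)
    (B : Finset (Idx p)) : ContDiff ℝ (⊤ : ℕ∞) (auxX Q u B) :=
  contDiff_pi.2 fun b => contDiff_pi.2 fun α => auxExt_contDiff u B (Q α) _ (hQ α) b.1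

theorem auxX_comm {p q : ℕ} (Q : Fin q → DFun p q)
    (hQ : ∀ α, IsDiffFun (Q α) ({(0 : Idx p)} : Finset (Idx p))) (u : Fld p q)
    (B A : Finset (Idx p)) (x v : {b // b ∈ B} → Fin q → ℝ) :
    fderiv ℝ (auxX Q u B) x (auxP q B A v) = auxP q B A (fderiv ℝ (auxX Q u B) x v) := by
  choose G hG hGQ using hQ
  have hform : auxX Q u B = fun x b => (fun α => G α b.1 (fun _ => x b)) := by
    funext x b α
    simp only [auxX, hGQ]
    congr 1
    funext J β
    have hJ : J.1 = 0 := Finset.mem_singleton.1 J.2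
    rw [hJ, add_zero, auxExt_mem]
  let g : {b // b ∈ B} → (Fin q → ℝ) → (Fin q → ℝ) := fun b y α => G α b.1 (fun _ => y)
  have hg : ∀ b, Differentiable ℝ (g b) := by
    intro b
    have : ContDiff ℝ (⊤ : ℕ∞) (g b) := by
      refine contDiff_pi.2 fun α => (hG α b.1).comp ?_
      fun_prop
    exact this.differentiable (by norm_num)
  have hder : HasFDerivAt (auxX Q u B) (ContinuousLinearMap.pi fun b =>
      (fderiv ℝ (g b) (x b)).comp (ContinuousLinearMap.proj b)) x := by
    rw [hform]
    refine hasFDerivAt_pi.2 fun b => ?_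
    have h1 : HasFDerivAt (g b) (fderiv ℝ (g b) (x b)) (x b) := (hg b (x b)).hasFDerivAt
    have h2 : HasFDerivAt (fun y : {b // b ∈ B} → Fin q → ℝ => y b)
        (ContinuousLinearMap.proj b) x :=
      (ContinuousLinearMap.proj (R := ℝ) (φ := fun _ : {b // b ∈ B} => Fin q → ℝ) b).hasFDerivAt
    exact HasFDerivAt.comp (g := g b) x h1 h2
  rw [hder.fderiv]
  funext b
  rw [auxP_apply]
  simp only [ContinuousLinearMap.pi_apply, ContinuousLinearMap.comp_apply,
    ContinuousLinearMap.proj_apply, auxP_apply]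
  split_ifs <;> simp

theorem aux_TT {p q : ℕ} (Q : Fin q → DFun p q) (S : Finset (Idx p)) (i : Fin p)
    (L : DFun p q) (n : Idx p) (u : Fld p q) :
    TT Q S i L n u = ∑ d ∈ S.biUnion (fun K => Finset.Icc 0 (K - Pi.single i (1 : ℤ))),
      ∑ α : Fin q, ∑ K ∈ S.filter (fun K => d + Pi.single i (1 : ℤ) ≤ K),
        Q α (n - Pi.single i (1 : ℤ) - d + K) u * pd L K α (n - Pi.single i (1 : ℤ) - d) u := by
  unfold TT hEuler
  conv_rhs => rw [Finset.sum_comm]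
  refine Finset.sum_congr rfl fun α _ => ?_
  simp only [Finset.mul_sum]
  rw [Finset.sum_sigma', Finset.sum_sigma']
  refine Finset.sum_bij' (fun a _ => ⟨a.2 - a.1, a.2⟩) (fun a _ => ⟨a.2 - a.1, a.2⟩) ?_ ?_ ?_ ?_ ?_
  · rintro ⟨J, K⟩ h
    simp only [Finset.mem_sigma, Finset.mem_biUnion, Finset.mem_Icc, Finset.mem_filter] at h ⊢
    obtain ⟨⟨K', hK', h1, h2⟩, hK, h3⟩ := h
    refine ⟨⟨K, hK, sub_nonneg.2 h3, sub_le_sub_left h1 K⟩, hK, ?_⟩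
    have := add_le_add_right h1 (K - J)
    simpa using this
  · rintro ⟨d, K⟩ h
    simp only [Finset.mem_sigma, Finset.mem_biUnion, Finset.mem_Icc, Finset.mem_filter] at h ⊢
    obtain ⟨⟨K', hK', h1, h2⟩, hK, h3⟩ := h
    have h4 : K - d ≤ K := sub_le_self K h1
    exact ⟨⟨K, hK, le_sub_iff_add_le'.2 h3, h4⟩, hK, h4⟩
  · rintro ⟨J, K⟩ h
    simp
  · rintro ⟨J, K⟩ h
    simp
  · rintro ⟨J, K⟩ h
    simp only
    congr 2
    abel

/-- Let `Q` be a Lie point characteristic generating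
variational symmetries of the difference Lagrangian `L`, i.e. `(pr v L)(n,u) = 0`
for all `n` and `u`.  Then the prolonged vector field annihilates each component
of the associated Noether conservation law: `(pr v(T^i(L)))(n,u) = 0` for every
`i`, `n`, and `u`. -/
theorem stmt_9 {p q : ℕ} (hp : 1 ≤ p) (hq : 1 ≤ q)
    (Q : Fin q → DFun p q)
    (hQ : ∀ α, IsDiffFun (Q α) ({(0 : Idx p)} : Finset (Idx p)))
    (L : DFun p q) (S : Finset (Idx p)) (hL : IsDiffFun L S)
    (hS : ∀ K ∈ S, (0 : Idx p) ≤ K)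
    (hsym : ∀ (n : Idx p) (u : Fld p q), prv Q S L n u = 0)
    (i : Fin p) (ST : Finset (Idx p)) (hST : IsDiffFun (TT Q S i L) ST)
    (n : Idx p) (u : Fld p q) :
    prv Q ST (TT Q S i L) n u = 0 := by
  let s : Idx p := Pi.single i (1 : ℤ)
  let R : Finset (Idx p) := S.biUnion (fun K => Finset.Icc 0 (K - s))
  let B : Finset (Idx p) := ST.image (fun J => n + J) ∪
    R.biUnion (fun d => S.image (fun K => n - s - d + K))
  have hB1 : ∀ J ∈ ST, n + J ∈ B := fun J hJ =>
    Finset.mem_union_left _ (Finset.mem_image_of_mem _ hJ)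
  have hB2 : ∀ d ∈ R, ∀ K ∈ S, n - s - d + K ∈ B := fun d hd K hK =>
    Finset.mem_union_right _ (Finset.mem_biUnion.2 ⟨d, hd, Finset.mem_image_of_mem _ hK⟩)
  let x : {b // b ∈ B} → Fin q → ℝ := fun b => u b.1
  have hx : auxExt u B x = u := by
    funext m β
    simp [auxExt, x]
  have key := aux_full Q u B (TT Q S i L) n ST hST hB1 x
  rw [hx] at key
  rw [key]
  have hTT : (fun y => TT Q S i L n (auxExt u B y)) = fun y => ∑ d ∈ R,
      fderiv ℝ (fun z => L (n - s - d) (auxExt u B z)) y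
        (auxP q B ((S.filter (fun K => d + s ≤ K)).image (fun J => n - s - d + J))
          (auxX Q u B y)) := by
    funext y
    rw [aux_TT]
    refine Finset.sum_congr rfl fun d hd => ?_
    exact aux_partial Q u B L (n - s - d) (S.filter (fun K => d + s ≤ K))
      (fun K hK => hB2 d hd K (Finset.mem_filter.1 hK).1) y
      ((auxExt_contDiff u B L S hL (n - s - d)).differentiable (by norm_num) y)
  have hcore := fun d (hd : d ∈ R) => aux_core (fun z => L (n - s - d) (auxExt u B z))
    (auxX Q u B)
    (auxP q B ((S.filter (fun K => d + s ≤ K)).image (fun J => n - s - d + J)))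
    (auxExt_contDiff u B L S hL (n - s - d)) (auxX_contDiff Q hQ u B)
    (auxX_comm Q hQ u B _)
    (fun y => by
      rw [← aux_full Q u B L (n - s - d) S hL (hB2 d hd) y]
      exact hsym _ _) x
  rw [hTT, (HasFDerivAt.fun_sum fun d hd => (hcore d hd).1).fderiv]
  rw [ContinuousLinearMap.sum_apply]
  exact Finset.sum_eq_zero fun d hd => (hcore d hd).2
end

section
/- Let p = 1 and let Q be a Lie point characteristic. For every difference function R depending only on forward values u(n+m), m ≥ 0, and all n ∈ ℤ and fields u : ℤ → ℝ^q: T(SR − R)(n,u) = (pr v R)(n,u), where SR denotes the difference function (n,u) ↦ R(n+1,u) and T = T^1 is built from Q. -/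
open scoped Classical

theorem pd_zero_aux {q : ℕ} {R : DFun 1 q} {S : Finset (Idx 1)} (hR : IsDiffFun R S)
    (J : Idx 1) (hJ : J ∉ S) (α : Fin q) (n : Idx 1) (u : Fld 1 q) : pd R J α n u = 0 := by
  obtain ⟨G, hG, hRG⟩ := hR
  unfold pd
  have : (fun t => R n (upd u (n + J) α t)) = fun _ => R n u := by
    funext t
    rw [hRG, hRG]
    congr 1
    funext K β
    unfold upd
    rw [if_neg]
    rintro ⟨h, -⟩
    exact hJ (add_left_cancel h ▸ K.2)
  rw [this]
  simp

theorem diff_aux {q : ℕ} {R : DFun 1 q} {S : Finset (Idx 1)} (hR : IsDiffFun R S)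
    (m : Idx 1) (α : Fin q) (n : Idx 1) (u : Fld 1 q) :
    Differentiable ℝ (fun t => R n (upd u m α t)) := by
  obtain ⟨G, hG, hRG⟩ := hR
  have : (fun t => R n (upd u m α t)) =
      G n ∘ fun t => (fun (J : {J // J ∈ S}) β => upd u m α t (n + J.1) β) := by
    funext t
    exact hRG _ _
  rw [this]
  apply ((hG n).differentiable (by simp)).comp
  rw [differentiable_pi]
  intro J
  rw [differentiable_pi]
  intro β
  unfold upd
  split_ifs <;> fun_prop

theorem pd_sub_aux {q : ℕ} {R : DFun 1 q} {S : Finset (Idx 1)} (hR : IsDiffFun R S)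
    (e K : Idx 1) (α : Fin q) (n : Idx 1) (u : Fld 1 q) :
    pd (fun n' u' => R (n' + e) u' - R n' u') K α n u
      = pd R (K - e) α (n + e) u - pd R K α n u := by
  unfold pd
  have h : n + e + (K - e) = n + K := by abel
  rw [h]
  exact deriv_fun_sub (diff_aux hR _ _ _ _ _) (diff_aux hR _ _ _ _ _)

theorem tele_aux (S : Finset (Idx 1)) (f : Idx 1 → ℝ) (hf : ∀ K, K ∉ S → f K = 0) (J : Idx 1) :
    ∑ K ∈ (S ∪ S.image (fun K => K + Pi.single 0 (1 : ℤ))).filter (fun K => J ≤ K),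
      (f (K - Pi.single 0 (1 : ℤ)) - f K) = f (J - Pi.single 0 (1 : ℤ)) := by
  set e : Idx 1 := Pi.single 0 (1 : ℤ) with he
  have e0 : e 0 = 1 := by simp [he]
  rw [Finset.sum_sub_distrib]
  have h1 : ∑ K ∈ (S ∪ S.image (fun K => K + e)).filter (fun K => J ≤ K), f (K - e)
      = ∑ K ∈ S.filter (fun K => J ≤ K + e), f K := by
    symm
    have : ∑ K ∈ S.filter (fun K => J ≤ K + e), f K
        = ∑ K ∈ (S.filter (fun K => J ≤ K + e)).image (fun K => K + e), f (K - e) := by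
      rw [Finset.sum_image (fun a _ b _ h => add_right_cancel h)]
      simp
    rw [this]
    apply Finset.sum_subset
    · intro K hK
      simp only [Finset.mem_image, Finset.mem_filter, Finset.mem_union] at hK ⊢
      obtain ⟨a, ⟨ha, hb⟩, rfl⟩ := hK
      exact ⟨Or.inr ⟨a, ha, rfl⟩, hb⟩
    · intro K hK hK'
      apply hf
      intro hm
      apply hK'
      simp only [Finset.mem_image, Finset.mem_filter] at hK ⊢
      exact ⟨K - e, ⟨hm, by simpa using hK.2⟩, by simp⟩
  have h2 : ∑ K ∈ (S ∪ S.image (fun K => K + e)).filter (fun K => J ≤ K), f K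
      = ∑ K ∈ S.filter (fun K => J ≤ K), f K := by
    symm
    apply Finset.sum_subset
    · intro K hK
      simp only [Finset.mem_filter, Finset.mem_union] at hK ⊢
      exact ⟨Or.inl hK.1, hK.2⟩
    · intro K hK hK'
      apply hf
      intro hm
      apply hK'
      simp only [Finset.mem_filter] at hK ⊢
      exact ⟨hm, hK.2⟩
  rw [h1, h2, Finset.sum_filter, Finset.sum_filter, ← Finset.sum_sub_distrib]
  rw [Finset.sum_eq_single (J - e)]
  · have a : J ≤ J - e + e := by simp
    have b : ¬ J ≤ J - e := by
      intro h
      have := h 0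
      simp only [Pi.sub_apply, e0] at this
      omega
    rw [if_pos a, if_neg b, sub_zero]
  · intro K _ hne
    have : J ≤ K + e ↔ J ≤ K := by
      have h3 : K 0 ≠ J 0 - 1 := by
        intro h
        apply hne
        funext i
        fin_cases i
        simpa [e0] using h
      simp only [Pi.le_def, Fin.forall_fin_one, Pi.add_apply, e0]
      omega
    simp [this]
  · intro h
    simp [hf _ h]

/-- Let `p = 1` and let `Q` be a Lie point characteristic.
For every difference function `R` depending only on forward values, and all
`n`, `u`: `T(SR − R)(n,u) = (pr v R)(n,u)`, where `SR` is the difference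
function `(n,u) ↦ R(n+1,u)` and `T = T^1` is built from `Q`.
(The stencil of `SR − R` is `SR ∪ (SR + 1)`.) -/
theorem stmt_11 {q : ℕ} (hq : 1 ≤ q)
    (Q : Fin q → DFun 1 q)
    (hQ : ∀ α, IsDiffFun (Q α) ({(0 : Idx 1)} : Finset (Idx 1)))
    (R : DFun 1 q) (SR : Finset (Idx 1)) (hR : IsDiffFun R SR)
    (hSR : ∀ K ∈ SR, (0 : Idx 1) ≤ K)
    (n : Idx 1) (u : Fld 1 q) :
    TT Q (SR ∪ SR.image (fun K => K + Pi.single 0 (1 : ℤ))) 0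
        (fun n' u' => R (n' + Pi.single 0 (1 : ℤ)) u' - R n' u') n u
      = prv Q SR R n u := by
  unfold TT prv
  apply Finset.sum_congr rfl
  intro α _
  have hE : ∀ J : Idx 1, hEuler (SR ∪ SR.image (fun K => K + Pi.single 0 (1 : ℤ)))
      (fun n' u' => R (n' + Pi.single 0 (1 : ℤ)) u' - R n' u') J α (n - Pi.single 0 (1 : ℤ)) u
      = pd R (J - Pi.single 0 (1 : ℤ)) α n u := by
    intro J
    unfold hEuler
    have := tele_aux SR (fun K => pd R K α (n - Pi.single 0 (1 : ℤ) - (K - J)) u)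
      (fun K hK => pd_zero_aux hR K hK α _ u) J
    have h4 : n - Pi.single 0 (1 : ℤ) - (J - Pi.single 0 (1 : ℤ) - J) = n := by abel
    simp only [h4] at this
    rw [← this]
    apply Finset.sum_congr rfl
    intro K _
    rw [pd_sub_aux hR]
    congr 2
    abel
  simp only [hE]
  have h5 : ∑ J ∈ SR, Q α (n + J) u * pd R J α n u
      = ∑ J ∈ SR.image (fun K => K + Pi.single 0 (1 : ℤ)),
        Q α (n + J - Pi.single 0 (1 : ℤ)) u * pd R (J - Pi.single 0 (1 : ℤ)) α n u := by
    rw [Finset.sum_image (fun a _ b _ h => add_right_cancel h)]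
    apply Finset.sum_congr rfl
    intro K _
    rw [← add_assoc, add_sub_cancel_right, add_sub_cancel_right]
  rw [h5]
  symm
  apply Finset.sum_subset
  · intro K hK
    rw [Finset.mem_biUnion]
    refine ⟨K, Finset.mem_union_right _ hK, ?_⟩
    rw [Finset.mem_image] at hK
    obtain ⟨a, ha, rfl⟩ := hK
    rw [Finset.mem_Icc]
    exact ⟨le_add_of_nonneg_left (hSR a ha), le_rfl⟩
  · intro K _ hK
    rw [pd_zero_aux hR, mul_zero]
    intro hm
    exact hK (Finset.mem_image.2 ⟨_, hm, by simp⟩)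
end
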